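/- Let L and S be nonempty finite types, let q be a probability distribution on L × S with S-marginal q_S, let f : S → L, and let η ∈ [0,1] satisfy q(f s, s) ≥ (1 − η)·q_S(s) for every s ∈ S. Let r be a probability distribution on S with TVD(q_S, r) ≤ δ, and define q̂ on L × S by q̂(l, s) = r(s) if l = f s and q̂(l, s) = 0 otherwise. Then q̂ is a probability distribution on L × S and TVD(q, q̂) ≤ δ + η. -/

import Mathlib

/-!
Compare `q` with `q̂ = decodedJoint f r` through `decodedJoint f q_S`, which decodes the exact
syndrome marginal. Passing from `q` to `decodedJoint f q_S` moves precisely the mass off the graph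
of `f`, so it costs `∑ x, q x - ∑ s, q (f s, s) ≤ η`. Passing on to `decodedJoint f r` costs
exactly `TVD(q_S, r) ≤ δ`, because `decodedJoint f` is an isometry.
-/

open Finset

section Definitions

variable {X L S M : Type*}

/-- The total variation distance between two weights on a finite type, normalized as half of the
`ℓ¹` distance. The weights are not required to be probability distributions. -/
noncomputable def tvDist [Fintype X] (p q : X → ℝ) : ℝ :=
  (1 / 2) * ∑ x, |p x - q x|

/-- The marginal of a weight on `L × S` on the second factor (the syndrome marginal `q_S`). -/
def sndMarginal [Fintype L] [AddCommMonoid M] (q : L × S → M) (s : S) : M :=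
  ∑ l, q (l, s)

/-- The joint weight on `L × S` with syndrome weight `r` and all the mass over `s` placed on the
decoded logical `f s`, i.e. the pushforward of `r` along `s ↦ (f s, s)`. -/
def decodedJoint [DecidableEq L] [Zero M] (f : S → L) (r : S → M) (x : L × S) : M :=
  if x.1 = f x.2 then r x.2 else 0

end Definitions

lemma tvDist_triangle {X : Type*} [Fintype X] (p q r : X → ℝ) :
    tvDist p r ≤ tvDist p q + tvDist q r := by
  simp only [tvDist, ← mul_add, ← sum_add_distrib]
  gcongr with x
  exact abs_sub_le (p x) (q x) (r x)

lemma sum_sndMarginal {L S M : Type*} [Fintype L] [Fintype S] [AddCommMonoid M] (q : L × S → M) :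
    ∑ s, sndMarginal q s = ∑ x, q x :=
  (Fintype.sum_prod_type_right q).symm

lemma sum_abs_sub_single_sum {L G : Type*} [Fintype L] [DecidableEq L] [AddCommGroup G]
    [LinearOrder G] [IsOrderedAddMonoid G] {p : L → G} (hp : 0 ≤ p) (a : L) :
    ∑ l, |p l - (Pi.single a (∑ i, p i) : L → G) l| = 2 • (∑ l, p l - p a) := by
  have at_peak : |p a - ∑ l, p l| = ∑ l, p l - p a := by
    rw [abs_sub_comm, abs_of_nonneg]
    exact sub_nonneg.2 (single_le_sum (fun l _ => hp l) (mem_univ a))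
  have off_peak : ∑ l ∈ univ.erase a, |p l - (Pi.single a (∑ i, p i) : L → G) l|
      = ∑ l, p l - p a := by
    rw [← sum_erase_eq_sub (mem_univ a)]
    refine sum_congr rfl fun l hl => ?_
    rw [Pi.single_eq_of_ne (ne_of_mem_erase hl), sub_zero, abs_of_nonneg (hp l)]
  rw [← add_sum_erase _ _ (mem_univ a), Pi.single_eq_same, at_peak, off_peak, two_nsmul]

section DecodedJoint

variable {L S M : Type*} [DecidableEq L]

lemma decodedJoint_nonneg [Zero M] [Preorder M] (f : S → L) {r : S → M}
    (hr : ∀ s, 0 ≤ r s) (x : L × S) : 0 ≤ decodedJoint f r x := by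
  unfold decodedJoint
  split_ifs
  exacts [hr x.2, le_rfl]

variable [Fintype L] [Fintype S]

lemma sum_decodedJoint [AddCommMonoid M] (f : S → L) (r : S → M) :
    ∑ x, decodedJoint f r x = ∑ s, r s := by
  simp [Fintype.sum_prod_type_right, decodedJoint]

lemma tvDist_decodedJoint_decodedJoint (f : S → L) (r r' : S → ℝ) :
    tvDist (decodedJoint f r) (decodedJoint f r') = tvDist r r' := by
  have abs_decodedJoint_sub (x : L × S) :
      |decodedJoint f r x - decodedJoint f r' x| = decodedJoint f (fun s => |r s - r' s|) x := by
    unfold decodedJoint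
    split_ifs
    · rfl
    · rw [sub_zero, abs_zero]
  simp only [tvDist, abs_decodedJoint_sub, sum_decodedJoint]

lemma tvDist_decodedJoint_sndMarginal (f : S → L) {q : L × S → ℝ} (hq : 0 ≤ q) :
    tvDist q (decodedJoint f (sndMarginal q)) = ∑ x, q x - ∑ s, q (f s, s) := by
  have fibre (s : S) : ∑ l, |q (l, s) - decodedJoint f (sndMarginal q) (l, s)|
      = 2 • (sndMarginal q s - q (f s, s)) := by
    simpa only [decodedJoint, sndMarginal, Pi.single_apply] using
      sum_abs_sub_single_sum (fun l => hq (l, s)) (f s)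
  rw [tvDist, Fintype.sum_prod_type_right, sum_congr rfl fun s _ => fibre s, ← smul_sum,
    sum_sub_distrib, sum_sndMarginal, nsmul_eq_mul]
  ring

lemma tvDist_decodedJoint_sndMarginal_le (f : S → L) {q : L × S → ℝ} (hq : 0 ≤ q) {η : ℝ}
    (hpeak : ∀ s, (1 - η) * sndMarginal q s ≤ q (f s, s)) :
    tvDist q (decodedJoint f (sndMarginal q)) ≤ η * ∑ x, q x := by
  have peak_mass : (1 - η) * ∑ x, q x ≤ ∑ s, q (f s, s) := by
    rw [← sum_sndMarginal, mul_sum]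
    exact sum_le_sum fun s _ => hpeak s
  rw [tvDist_decodedJoint_sndMarginal f hq]
  linarith

lemma tvDist_decodedJoint_le (f : S → L) {q : L × S → ℝ} (hq : 0 ≤ q) {η : ℝ}
    (hpeak : ∀ s, (1 - η) * sndMarginal q s ≤ q (f s, s)) (r : S → ℝ) :
    tvDist q (decodedJoint f r) ≤ tvDist (sndMarginal q) r + η * ∑ x, q x :=
  calc tvDist q (decodedJoint f r)
      ≤ tvDist q (decodedJoint f (sndMarginal q))
          + tvDist (decodedJoint f (sndMarginal q)) (decodedJoint f r) :=
        tvDist_triangle _ _ _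
    _ ≤ η * ∑ x, q x + tvDist (sndMarginal q) r :=
        add_le_add (tvDist_decodedJoint_sndMarginal_le f hq hpeak)
          (tvDist_decodedJoint_decodedJoint f _ r).le
    _ = tvDist (sndMarginal q) r + η * ∑ x, q x := add_comm _ _

end DecodedJoint

theorem stmt_8 {L S : Type*} [Fintype L] [Fintype S] [Nonempty L] [Nonempty S]
    [DecidableEq L]
    (q : L × S → ℝ)
    (hq0 : ∀ x, 0 ≤ q x) (hq1 : ∑ x, q x = 1)
    (f : S → L) (η : ℝ) (hη : η ∈ Set.Icc (0 : ℝ) 1)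
    (hpeak : ∀ s : S, (1 - η) * (∑ l, q (l, s)) ≤ q (f s, s))
    (r : S → ℝ) (hr0 : ∀ s, 0 ≤ r s) (hr1 : ∑ s, r s = 1)
    (δ : ℝ)
    (htvd : (1 / 2) * ∑ s, |(∑ l, q (l, s)) - r s| ≤ δ) :
    (∀ x : L × S, 0 ≤ (if x.1 = f x.2 then r x.2 else 0)) ∧
    (∑ x : L × S, (if x.1 = f x.2 then r x.2 else 0)) = 1 ∧
    (1 / 2) * ∑ x : L × S, |q x - (if x.1 = f x.2 then r x.2 else 0)| ≤ δ + η := by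
  refine ⟨decodedJoint_nonneg f hr0, (sum_decodedJoint f r).trans hr1, ?_⟩
  calc tvDist q (decodedJoint f r)
      ≤ tvDist (sndMarginal q) r + η * ∑ x, q x := tvDist_decodedJoint_le f hq0 hpeak r
    _ = tvDist (sndMarginal q) r + η := by rw [hq1, mul_one]
    _ ≤ δ + η := add_le_add_left htvd η
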